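/- Let θ ∈ ℝ^d with |θ| = 1, let λ ∈ ℝ, and let f : {x ∈ ℝ^d : |x| = 1} → ℝ be bounded and measurable. Then both of the following complex-valued integrals converge absolutely and are equal: ∫_{0<|y|<1} |y|^{iλ - α} (1 - |y|^2)^{α/2} |θ - y|^{-d} f(y/|y|) dy = ∫_{|w|>1} |w|^{-iλ - d} (|w|^2 - 1)^{α/2} |θ - w|^{-d} f(w/|w|) dw, where |y|^{iλ} = exp(iλ log|y|). (This change-of-variables identity via inversion through the unit sphere is the relation ρ̂_{iλ}[f](θ) = ρ_{iλ + d - α}[f](θ) between the ascending and descending ladder potential operators used in the proof of the deep Wiener–Hopf factorisation, Theorem 1.9.) -/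

import Mathlib

open MeasureTheory Real Set Complex

/-!
The inversion `y ↦ y / |y|²` exchanges the punctured unit ball with the exterior of the closed unit
ball, fixes the unit sphere and preserves directions. Since its Jacobian is `|y|⁻²ᵈ` and it
satisfies `|θ - y / |y|²| = |θ - y| / |y|` when `|θ| = 1`, it carries one kernel to the other.
Absolute convergence has to be checked inside the ball only: as `1 - |y|² ≤ 2 |θ - y|`, the kernel
is there at most a constant times `|y|^(-α) |θ - y|^(α/2 - d)`, with two integrable singularities
at distinct points.
-/

open EuclideanGeometry (inversion)
open Module (finrank)

section TwoSingularities

lemma locallyIntegrable_mul_of_continuousOn_compl_singleton {X R : Type*} [TopologicalSpace X]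
    [LocallyCompactSpace X] [T2Space X] [MeasurableSpace X] [OpensMeasurableSpace X]
    [NormedRing R] [SecondCountableTopologyEither X R] {μ : Measure X} {f g : X → R} {p q : X}
    (hpq : p ≠ q) (hf : LocallyIntegrable f μ) (hg : LocallyIntegrable g μ)
    (hfc : ContinuousOn f {p}ᶜ) (hgc : ContinuousOn g {q}ᶜ) :
    LocallyIntegrable (fun x => f x * g x) μ := by
  intro x
  rcases eq_or_ne x p with rfl | hx
  · have hfg := (hf.locallyIntegrableOn {q}ᶜ).mul_continuousOn hgc
      isOpen_compl_singleton.isLocallyClosed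
    simpa only [isOpen_compl_singleton.nhdsWithin_eq hpq] using hfg x hpq
  · have hfg := (hg.locallyIntegrableOn {p}ᶜ).continuousOn_mul hfc
      isOpen_compl_singleton.isLocallyClosed
    simpa only [isOpen_compl_singleton.nhdsWithin_eq hx] using hfg x hx

lemma continuousOn_norm_sub_rpow {E : Type*} [NormedAddCommGroup E] (p : E) (a : ℝ) :
    ContinuousOn (fun x => ‖x - p‖ ^ a) {p}ᶜ :=
  ContinuousOn.rpow_const (by fun_prop) fun _ hx => Or.inl (norm_sub_pos_iff.2 hx).ne'

variable {E : Type*} [NormedAddCommGroup E] [NormedSpace ℝ E] [FiniteDimensional ℝ E]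
  [MeasurableSpace E] [BorelSpace E] {μ : Measure E} [μ.IsAddHaarMeasure] {a b : ℝ}

lemma locallyIntegrable_norm_sub_rpow [Nontrivial E] (p : E) (ha : -(finrank ℝ E : ℝ) < a) :
    LocallyIntegrable (fun x => ‖x - p‖ ^ a) μ := by
  have hzero : LocallyIntegrable (fun x : E => ‖x‖ ^ a) μ :=
    locallyIntegrable_of_norm_le_rpow Module.finrank_pos (C := 1) (neg_lt.1 ha)
      (ae_of_all _ fun x => by rw [one_mul, neg_neg, Real.norm_of_nonneg (by positivity)])
      (measurable_norm.pow_const a).aestronglyMeasurable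
  rw [← map_sub_right_eq_self μ p] at hzero
  exact (locallyIntegrable_map_homeomorph (Homeomorph.subRight p)).1 hzero

lemma locallyIntegrable_norm_sub_rpow_mul_norm_sub_rpow {p q : E} (hpq : p ≠ q)
    (ha : -(finrank ℝ E : ℝ) < a) (hb : -(finrank ℝ E : ℝ) < b) :
    LocallyIntegrable (fun x => ‖x - p‖ ^ a * ‖x - q‖ ^ b) μ :=
  have : Nontrivial E := ⟨p, q, hpq⟩
  locallyIntegrable_mul_of_continuousOn_compl_singleton hpq
    (locallyIntegrable_norm_sub_rpow p ha) (locallyIntegrable_norm_sub_rpow q hb)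
    (continuousOn_norm_sub_rpow p a) (continuousOn_norm_sub_rpow q b)

end TwoSingularities

section InversionChangeOfVariables

variable {E : Type*} [NormedAddCommGroup E] [InnerProductSpace ℝ E]

lemma hasFDerivWithinAt_inversion {c x : E} {s : Set E} (R : ℝ) (hx : x ≠ c) :
    HasFDerivWithinAt (inversion c R) (fderiv ℝ (inversion c R) x) s x :=
  (EuclideanGeometry.hasFDerivAt_inversion hx).differentiableAt.hasFDerivAt.hasFDerivWithinAt

variable [FiniteDimensional ℝ E]

lemma abs_det_smul_reflection (K : Submodule ℝ E) (r : ℝ) :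
    |(r • (K.reflection : E →L[ℝ] E)).det| = |r| ^ finrank ℝ E := by
  have hdet : |LinearMap.det K.reflection.toLinearMap| = 1 := by
    rw [Submodule.det_reflection, abs_pow, abs_neg, abs_one, one_pow]
  rw [ContinuousLinearMap.det, ContinuousLinearMap.toLinearMap_smul, LinearMap.det_smul, abs_mul,
    abs_pow]
  exact (congrArg _ hdet).trans (mul_one _)

lemma abs_det_fderiv_inversion {c x : E} (R : ℝ) (hx : x ≠ c) :
    |(fderiv ℝ (inversion c R) x).det| = ((R / dist x c) ^ 2) ^ finrank ℝ E := by
  rw [(EuclideanGeometry.hasFDerivAt_inversion hx).fderiv, abs_det_smul_reflection,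
    abs_of_nonneg (sq_nonneg _)]

variable [MeasurableSpace E] [BorelSpace E] {μ : Measure E} [μ.IsAddHaarMeasure]
  {F : Type*} [NormedAddCommGroup F] [NormedSpace ℝ F] {c : E} {R : ℝ} {s : Set E}

lemma integrableOn_image_inversion_iff (hR : R ≠ 0) (hs : MeasurableSet s) (hc : c ∉ s)
    (g : E → F) :
    IntegrableOn g (inversion c R '' s) μ ↔
      IntegrableOn (fun x => ((R / dist x c) ^ 2) ^ finrank ℝ E • g (inversion c R x)) s μ := by
  have hne {x : E} (hx : x ∈ s) : x ≠ c := ne_of_mem_of_not_mem hx hc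
  rw [integrableOn_image_iff_integrableOn_abs_det_fderiv_smul μ hs
    (fun x hx => hasFDerivWithinAt_inversion R (hne hx))
    (EuclideanGeometry.inversion_injective c hR).injOn]
  exact integrableOn_congr_fun (fun x hx => by rw [abs_det_fderiv_inversion R (hne hx)]) hs

lemma integral_image_inversion (hR : R ≠ 0) (hs : MeasurableSet s) (hc : c ∉ s) (g : E → F) :
    ∫ x in inversion c R '' s, g x ∂μ =
      ∫ x in s, ((R / dist x c) ^ 2) ^ finrank ℝ E • g (inversion c R x) ∂μ := by
  have hne {x : E} (hx : x ∈ s) : x ≠ c := ne_of_mem_of_not_mem hx hc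
  rw [integral_image_eq_integral_abs_det_fderiv_smul μ hs
    (fun x hx => hasFDerivWithinAt_inversion R (hne hx))
    (EuclideanGeometry.inversion_injective c hR).injOn]
  exact setIntegral_congr_fun hs fun x hx => by rw [abs_det_fderiv_inversion R (hne hx)]

end InversionChangeOfVariables

section UnitInversion

variable {E : Type*} [NormedAddCommGroup E] [InnerProductSpace ℝ E]

lemma norm_inversion_zero_one (y : E) : ‖inversion 0 1 y‖ = ‖y‖⁻¹ := by
  simpa using EuclideanGeometry.dist_inversion_center (0 : E) y 1

lemma inv_norm_smul_inversion_zero_one (y : E) :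
    ‖inversion 0 1 y‖⁻¹ • inversion 0 1 y = ‖y‖⁻¹ • y := by
  have hinv : inversion 0 1 y = (‖y‖⁻¹ * ‖y‖⁻¹) • y := by simp [inversion, sq]
  rw [norm_inversion_zero_one, hinv, smul_smul, ← mul_assoc, inv_mul_mul_self]

lemma norm_sub_inversion_zero_one {θ y : E} (hθ : ‖θ‖ = 1) (hy : y ≠ 0) :
    ‖θ - inversion 0 1 y‖ = ‖θ - y‖ / ‖y‖ := by
  have hθ0 : θ ≠ 0 := norm_ne_zero_iff.1 (hθ ▸ one_ne_zero)
  have hfix : inversion 0 1 θ = θ := EuclideanGeometry.inversion_of_mem_sphere (by simpa using hθ)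
  have hdist := EuclideanGeometry.dist_inversion_inversion hθ0 hy 1
  rw [hfix, dist_zero_right, dist_zero_right, hθ, dist_eq_norm, dist_eq_norm] at hdist
  rw [hdist]
  ring

lemma inversion_zero_one_image_punctured_ball :
    inversion 0 1 '' {y : E | 0 < ‖y‖ ∧ ‖y‖ < 1} = {w : E | 1 < ‖w‖} := by
  have hinv := EuclideanGeometry.inversion_inversion (0 : E) one_ne_zero
  ext w
  rw [image_eq_preimage_of_inverse hinv hinv, mem_preimage, mem_ofPred_eq, mem_ofPred_eq,
    norm_inversion_zero_one, ← one_lt_inv_iff₀, inv_inv]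

end UnitInversion

lemma measurableSet_punctured_ball {E : Type*} [NormedAddCommGroup E] [MeasurableSpace E]
    [OpensMeasurableSpace E] : MeasurableSet {y : E | 0 < ‖y‖ ∧ ‖y‖ < 1} := by
  measurability

section LadderKernels

variable {E : Type*} [NormedAddCommGroup E] [NormedSpace ℝ E]

/-- The kernel `|y|^u (1 - |y|²)^(α/2) |θ - y|^(-d)`, for `|y| < 1`, of the descending ladder
potential operator `ρ̂_z`, where `u = z - α` and `d = dim E`. -/
noncomputable def descendingLadderKernel (α : ℝ) (u : ℂ) (θ y : E) : ℂ :=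
  (‖y‖ : ℂ) ^ u * (((1 - ‖y‖ ^ 2) ^ (α / 2) * ‖θ - y‖ ^ (-(finrank ℝ E : ℝ)) : ℝ) : ℂ)

/-- The kernel `|w|^u (|w|² - 1)^(α/2) |θ - w|^(-d)`, for `|w| > 1`, of the ascending ladder
potential operator `ρ_z`, where `u = -z - α` and `d = dim E`. -/
noncomputable def ascendingLadderKernel (α : ℝ) (u : ℂ) (θ w : E) : ℂ :=
  (‖w‖ : ℂ) ^ u * (((‖w‖ ^ 2 - 1) ^ (α / 2) * ‖θ - w‖ ^ (-(finrank ℝ E : ℝ)) : ℝ) : ℂ)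

lemma norm_descendingLadderKernel_le {α : ℝ} (hα : 0 ≤ α) (u : ℂ) {θ y : E} (hθ : ‖θ‖ = 1)
    (hy0 : 0 < ‖y‖) (hy1 : ‖y‖ < 1) :
    ‖descendingLadderKernel α u θ y‖ ≤
      2 ^ (α / 2) * (‖y‖ ^ u.re * ‖θ - y‖ ^ (α / 2 - finrank ℝ E)) := by
  have hdist : 1 - ‖y‖ ≤ ‖θ - y‖ := hθ ▸ norm_sub_norm_le θ y
  have hpos : 0 < ‖θ - y‖ := by linarith
  have hsq : 0 ≤ 1 - ‖y‖ ^ 2 := by nlinarith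
  have hboundary : (1 - ‖y‖ ^ 2) ^ (α / 2) ≤ 2 ^ (α / 2) * ‖θ - y‖ ^ (α / 2) := by
    rw [← Real.mul_rpow zero_le_two hpos.le]
    exact Real.rpow_le_rpow hsq (by nlinarith) (by positivity)
  rw [descendingLadderKernel, norm_mul, norm_cpow_eq_rpow_re_of_pos hy0,
    Complex.norm_of_nonneg (by positivity)]
  calc ‖y‖ ^ u.re * ((1 - ‖y‖ ^ 2) ^ (α / 2) * ‖θ - y‖ ^ (-(finrank ℝ E : ℝ)))
      ≤ ‖y‖ ^ u.re * (2 ^ (α / 2) * ‖θ - y‖ ^ (α / 2) * ‖θ - y‖ ^ (-(finrank ℝ E : ℝ))) := by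
        gcongr
    _ = 2 ^ (α / 2) * (‖y‖ ^ u.re * ‖θ - y‖ ^ (α / 2 - finrank ℝ E)) := by
        rw [sub_eq_add_neg (α / 2), Real.rpow_add hpos]
        ring

variable [MeasurableSpace E] [BorelSpace E]

lemma measurable_descendingLadderKernel [SecondCountableTopology E] (α : ℝ) (u : ℂ) (θ : E) :
    Measurable (descendingLadderKernel α u θ) := by
  unfold descendingLadderKernel
  fun_prop

variable [FiniteDimensional ℝ E] {μ : Measure E} [μ.IsAddHaarMeasure]
  {F : Type*} [NormedAddCommGroup F] [NormedSpace ℂ F] {α : ℝ} {u : ℂ} {θ : E} {f : E → F}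

lemma integrableOn_descendingLadderKernel (hα : 0 < α) (hu : -(finrank ℝ E : ℝ) < u.re)
    (hθ : ‖θ‖ = 1) :
    IntegrableOn (descendingLadderKernel α u θ) {y | 0 < ‖y‖ ∧ ‖y‖ < 1} μ := by
  have hθ0 : 0 ≠ θ := (norm_ne_zero_iff.1 (hθ ▸ one_ne_zero)).symm
  have hexp : -(finrank ℝ E : ℝ) < α / 2 - finrank ℝ E := by linarith
  have hball : {y : E | 0 < ‖y‖ ∧ ‖y‖ < 1} ⊆ Metric.closedBall 0 1 :=
    fun y hy => mem_closedBall_zero_iff.2 hy.2.le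
  have hloc : LocallyIntegrable
      (fun y => ‖y‖ ^ u.re * ‖θ - y‖ ^ (α / 2 - (finrank ℝ E : ℝ))) μ := by
    simpa only [sub_zero, norm_sub_rev _ θ] using
      locallyIntegrable_norm_sub_rpow_mul_norm_sub_rpow hθ0 hu hexp
  have hdom := (hloc.integrableOn_isCompact (isCompact_closedBall 0 1)).mono_set hball
  refine Integrable.mono' (hdom.const_mul (2 ^ (α / 2)))
    (measurable_descendingLadderKernel α u θ).aestronglyMeasurable ?_
  exact (ae_restrict_iff' measurableSet_punctured_ball).2
    (ae_of_all _ fun y hy => norm_descendingLadderKernel_le hα.le u hθ hy.1 hy.2)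

lemma integrableOn_descendingLadderKernel_smul (hα : 0 < α) (hu : -(finrank ℝ E : ℝ) < u.re)
    (hθ : ‖θ‖ = 1) (hf : StronglyMeasurable f) (hfb : ∃ C, ∀ y, ‖y‖ = 1 → ‖f y‖ ≤ C) :
    IntegrableOn (fun y => descendingLadderKernel α u θ y • f (‖y‖⁻¹ • y))
      {y | 0 < ‖y‖ ∧ ‖y‖ < 1} μ := by
  obtain ⟨C, hC⟩ := hfb
  refine (integrableOn_descendingLadderKernel hα hu hθ).smul_bdd C
    (hf.comp_measurable (by fun_prop)).aestronglyMeasurable ?_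
  exact (ae_restrict_iff' measurableSet_punctured_ball).2
    (ae_of_all _ fun y hy => hC _ (norm_smul_inv_norm (norm_pos_iff.1 hy.1)))

end LadderKernels

section KernelInversion

variable {E : Type*} [NormedAddCommGroup E] [InnerProductSpace ℝ E]

lemma inv_sq_sub_one_rpow {x : ℝ} (hx0 : 0 < x) (hx1 : x ≤ 1) (b : ℝ) :
    (x⁻¹ ^ 2 - 1) ^ b = x ^ (-2 * b) * (1 - x ^ 2) ^ b := by
  have hfactor : x⁻¹ ^ 2 - 1 = x ^ (-2 : ℝ) * (1 - x ^ 2) := by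
    rw [Real.rpow_neg hx0.le, Real.rpow_two]
    field_simp
  rw [hfactor, Real.mul_rpow (by positivity) (by nlinarith), ← Real.rpow_mul hx0.le]

lemma jacobian_smul_ascendingLadderKernel_inversion {α : ℝ} {θ y : E} (z : ℂ) (hθ : ‖θ‖ = 1)
    (hy0 : 0 < ‖y‖) (hy1 : ‖y‖ ≤ 1) :
    ((1 / dist y 0) ^ 2) ^ finrank ℝ E •
        ascendingLadderKernel α (-z - finrank ℝ E) θ (inversion 0 1 y) =
      descendingLadderKernel α (z - α) θ y := by
  have hn : (‖y‖ : ℂ) ≠ 0 := ofReal_ne_zero.2 hy0.ne'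
  have hjac : ((1 / (‖y‖ : ℂ)) ^ 2) ^ finrank ℝ E * (‖y‖ : ℂ) ^ finrank ℝ E *
      (‖y‖ : ℂ) ^ finrank ℝ E = 1 := by
    rw [mul_assoc, ← mul_pow, ← mul_pow, ← sq, ← mul_pow, one_div_mul_cancel hn, one_pow, one_pow]
  have hpow : ((‖y‖⁻¹ : ℝ) : ℂ) ^ (-z - finrank ℝ E) =
      (‖y‖ : ℂ) ^ z * (‖y‖ : ℂ) ^ finrank ℝ E := by
    rw [ofReal_inv, inv_cpow_ofReal_nonneg hy0.le, ← cpow_neg, ← cpow_natCast, ← cpow_add _ _ hn]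
    ring_nf
  have hdist : (‖θ - y‖ / ‖y‖) ^ (-(finrank ℝ E : ℝ)) =
      ‖θ - y‖ ^ (-(finrank ℝ E : ℝ)) * ‖y‖ ^ finrank ℝ E := by
    rw [Real.div_rpow (norm_nonneg _) hy0.le, Real.rpow_neg hy0.le, Real.rpow_natCast,
      div_inv_eq_mul]
  have hboundary : (‖y‖⁻¹ ^ 2 - 1) ^ (α / 2) = ‖y‖ ^ (-α) * (1 - ‖y‖ ^ 2) ^ (α / 2) := by
    rw [inv_sq_sub_one_rpow hy0 hy1, neg_mul, mul_div_cancel₀ α two_ne_zero]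
  rw [ascendingLadderKernel, norm_inversion_zero_one,
    norm_sub_inversion_zero_one hθ (norm_pos_iff.1 hy0), hpow, hdist, hboundary, dist_zero_right,
    Complex.real_smul]
  calc _ = (((1 / (‖y‖ : ℂ)) ^ 2) ^ finrank ℝ E * (‖y‖ : ℂ) ^ finrank ℝ E *
          (‖y‖ : ℂ) ^ finrank ℝ E) * descendingLadderKernel α (z - α) θ y := by
        rw [descendingLadderKernel, sub_eq_add_neg z, cpow_add _ _ hn, ← ofReal_neg,
          ← ofReal_cpow hy0.le]
        push_cast
        ring
    _ = descendingLadderKernel α (z - α) θ y := by rw [hjac, one_mul]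

end KernelInversion

theorem ladder_potential_inversion_identity_general {E F : Type*} [NormedAddCommGroup E]
    [InnerProductSpace ℝ E] [FiniteDimensional ℝ E] [MeasurableSpace E] [BorelSpace E]
    {μ : Measure E} [μ.IsAddHaarMeasure] [NormedAddCommGroup F] [NormedSpace ℂ F]
    {α : ℝ} (hα : 0 < α) {z : ℂ} (hz : α - finrank ℝ E < z.re) {θ : E} (hθ : ‖θ‖ = 1)
    {f : E → F} (hf : StronglyMeasurable f) (hfb : ∃ C, ∀ y, ‖y‖ = 1 → ‖f y‖ ≤ C) :
    IntegrableOn (fun y => descendingLadderKernel α (z - α) θ y • f (‖y‖⁻¹ • y))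
      {y | 0 < ‖y‖ ∧ ‖y‖ < 1} μ
    ∧ IntegrableOn (fun w => ascendingLadderKernel α (-z - finrank ℝ E) θ w • f (‖w‖⁻¹ • w))
      {w | 1 < ‖w‖} μ
    ∧ (∫ y in {y | 0 < ‖y‖ ∧ ‖y‖ < 1},
        descendingLadderKernel α (z - α) θ y • f (‖y‖⁻¹ • y) ∂μ)
      = ∫ w in {w | 1 < ‖w‖},
        ascendingLadderKernel α (-z - finrank ℝ E) θ w • f (‖w‖⁻¹ • w) ∂μ := by
  have hint := integrableOn_descendingLadderKernel_smul (μ := μ) (u := z - α) hα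
    (by rw [sub_re, ofReal_re]; linarith) hθ hf hfb
  have hmeas : MeasurableSet {y : E | 0 < ‖y‖ ∧ ‖y‖ < 1} := measurableSet_punctured_ball
  have h0 : (0 : E) ∉ {y : E | 0 < ‖y‖ ∧ ‖y‖ < 1} := fun h => h.1.ne' norm_zero
  have hkernel : EqOn (fun y => descendingLadderKernel α (z - α) θ y • f (‖y‖⁻¹ • y))
      (fun y => ((1 / dist y 0) ^ 2) ^ finrank ℝ E •
        ascendingLadderKernel α (-z - finrank ℝ E) θ (inversion 0 1 y) •
          f (‖inversion 0 1 y‖⁻¹ • inversion 0 1 y)) {y | 0 < ‖y‖ ∧ ‖y‖ < 1} := fun y hy => by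
    simp only [inv_norm_smul_inversion_zero_one, ← smul_assoc,
      jacobian_smul_ascendingLadderKernel_inversion z hθ hy.1 hy.2.le]
  rw [← inversion_zero_one_image_punctured_ball,
    integrableOn_image_inversion_iff one_ne_zero hmeas h0,
    integral_image_inversion one_ne_zero hmeas h0]
  exact ⟨hint, hint.congr_fun hkernel hmeas, setIntegral_congr_fun hmeas hkernel⟩

theorem ladder_potential_inversion_identity
    (d : ℕ) (hd : 2 ≤ d) (α : ℝ) (hα0 : 0 < α) (hα2 : α < 2)
    (θ : EuclideanSpace ℝ (Fin d)) (hθ : ‖θ‖ = 1) (lam : ℝ)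
    (f : EuclideanSpace ℝ (Fin d) → ℝ) (hf : Measurable f)
    (hfb : ∃ C, ∀ y, |f y| ≤ C) :
    IntegrableOn (fun y : EuclideanSpace ℝ (Fin d) =>
        (‖y‖ : ℂ) ^ (Complex.I * (lam : ℂ) - (α : ℂ)) *
          (((1 - ‖y‖ ^ 2) ^ (α / 2) * ‖θ - y‖ ^ (-(d : ℝ)) * f (‖y‖⁻¹ • y) : ℝ) : ℂ))
      {y : EuclideanSpace ℝ (Fin d) | 0 < ‖y‖ ∧ ‖y‖ < 1} volume
    ∧ IntegrableOn (fun w : EuclideanSpace ℝ (Fin d) =>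
        (‖w‖ : ℂ) ^ (-(Complex.I * (lam : ℂ)) - (d : ℂ)) *
          (((‖w‖ ^ 2 - 1) ^ (α / 2) * ‖θ - w‖ ^ (-(d : ℝ)) * f (‖w‖⁻¹ • w) : ℝ) : ℂ))
      {w : EuclideanSpace ℝ (Fin d) | 1 < ‖w‖} volume
    ∧ (∫ y in {y : EuclideanSpace ℝ (Fin d) | 0 < ‖y‖ ∧ ‖y‖ < 1},
        (‖y‖ : ℂ) ^ (Complex.I * (lam : ℂ) - (α : ℂ)) *
          (((1 - ‖y‖ ^ 2) ^ (α / 2) * ‖θ - y‖ ^ (-(d : ℝ)) * f (‖y‖⁻¹ • y) : ℝ) : ℂ))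
      = ∫ w in {w : EuclideanSpace ℝ (Fin d) | 1 < ‖w‖},
        (‖w‖ : ℂ) ^ (-(Complex.I * (lam : ℂ)) - (d : ℂ)) *
          (((‖w‖ ^ 2 - 1) ^ (α / 2) * ‖θ - w‖ ^ (-(d : ℝ)) * f (‖w‖⁻¹ • w) : ℝ) : ℂ) := by
  have hd' : (2 : ℝ) ≤ d := by exact_mod_cast hd
  simpa [descendingLadderKernel, ascendingLadderKernel, mul_assoc] using
    ladder_potential_inversion_identity_general (μ := volume) (z := I * lam) hα0
      (by simp; linarith) hθ (f := fun y => (f y : ℂ))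
      (measurable_ofReal.comp hf).stronglyMeasurable (hfb.imp fun C hC y _ => by simpa using hC y)
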